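/- (Theorem 3.2) There do not exist: a finite nonempty set X with n := |X|, real matrices A_0,…,A_6 and E_0,…,E_6 indexed by X × X, and real numbers m, c2, b3, b4, c5 with m > 2, c2 > 0, c5 > 0, b3 > 0, b4 > 0 and m − b3 > 0, satisfying all of: (a) each A_i is symmetric with every entry equal to 0 or 1, A_0 is the identity matrix, and A_0 + A_1 + … + A_6 equals the all-ones matrix J; (b) for all i, j, the product A_i·A_j lies in the real linear span of A_0,…,A_6; (c) E_i·E_j = 0 for i ≠ j, E_i·E_i = E_i, E_0 + E_1 + … + E_6 is the identity matrix, E_0 = (1/n)·J, each E_i is nonzero, and each E_i lies in the real linear span of A_0,…,A_6; (d) for every j with 0 ≤ j ≤ 6: n·(E_1 ∘ E_j) = b_{j−1}·E_{j−1} + a_j·E_j + c_{j+1}·E_{j+1}, where ∘ denotes entrywise (Hadamard) product, E_{−1} := 0 and E_7 := 0, (b_0, b_1, …, b_6) := (m, m−1, 1, b3, b4, 1, 0), (c_1, c_2, …, c_7) := (1, c2, m−b3, 1, c5, m, 1), a_0 := 0 and a_j := m − b_j − c_j for 1 ≤ j ≤ 6; (e) a_2 = a_4 + a_5. (In other words,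 there is no symmetric association scheme with six classes that is Q-polynomial with Krein array {m, m−1, 1, b3*, b4*, 1; 1, c2*, m−b3*, 1, c5*, m}, a2* = a4* + a5*, and first multiplicity m > 2.) -/

import Mathlib

/-!
Write `u x y = n * E₁ x y`. The idempotent `F = E₀ + E₃ + E₆` satisfies `u ∘ F = I - F`, and this
forces `F = (m + 1)⁻¹ * B`, where `B` is the 0-1 matrix of an equivalence relation whose classes
("blocks") have `m + 1` points (`F_diag`, `F_eq`). In particular `m` is an integer, so `m ≥ 3`.
Rows of `F` indexed by one block coincide, so `E₃ = E₃ F` is constant on blocks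
(`E3_eq_of_F_ne_zero`). The three-term recurrence makes `E₃` a cubic polynomial `V` in `u`
(`cubic_E3`), so on each block the numbers `u x z` all lie on one level of `V`. Moreover the
`F`-weighted averages of `1`, `u x ·`, `(u x ·)²` over a block are `1`, `0`, `m`.

Since `V(m - 1) = -c2 * m` and `V(m) = m * (m - 1)`, the level `(m - b3) * (m - 1 - c5)` is taken
by `V` at some `θ` in the interval `(m - 1, m)`. For this level, `θ` is an eigenvalue of the
tridiagonal matrix of Krein parameters; an explicit eigenvector shows that `θ` is an entry of `u`
(`exists_entry`). If `u x y = θ`, averaging the quadratic `g(t) = (V(t) - V(θ)) / (t - θ)` over the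
block of `y` gives `(θ - m + 1) * (θ + c2)`. On the other hand `g` vanishes at every value in the
block other than `θ`, and `g(θ) > 0`, so the average is at least `g(θ) / (m + 1)`. The difference
of the two sides factors as `-(m - θ) * ((m - 2) * θ - 1 + (m - 1) * c2) < 0`, a contradiction.
-/

open Finset

/-! ### The data entering the argument -/

/-- The part of the hypotheses used in the proof: symmetric matrices `E 0, …, E 6` which are
pairwise orthogonal idempotents with sum `1` and `E 0 = J / n`, together with the entrywise
three-term recurrences for the Krein array `{m, m-1, 1, b3, b4, 1; 1, c2, m-b3, 1, c5, m}`.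
The field `param` is the relation `a₂ = a₄ + a₅`, solved for `b4`. -/
structure ExceptionalKrein {X : Type} [Fintype X] [DecidableEq X]
    (E : Fin 7 → Matrix X X ℝ) (m c2 b3 b4 c5 : ℝ) : Prop where
  m_gt : 2 < m
  c2_pos : 0 < c2
  c5_pos : 0 < c5
  b3_pos : 0 < b3
  b4_pos : 0 < b4
  b3_lt : b3 < m
  param : b4 = m - 1 - c5 + c2
  symm : ∀ i x y, E i y x = E i x y
  orth : ∀ i j, i ≠ j → E i * E j = 0
  idem : ∀ i, E i * E i = E i
  sum_one : E 0 + E 1 + E 2 + E 3 + E 4 + E 5 + E 6 = 1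
  zero : ∀ x y, E 0 x y = (Fintype.card X : ℝ)⁻¹
  r1 : ∀ x y, Fintype.card X * E 1 x y * E 1 x y = m * E 0 x y + c2 * E 2 x y
  r2 : ∀ x y, Fintype.card X * E 1 x y * E 2 x y =
    (m - 1) * E 1 x y + (m - 1 - c2) * E 2 x y + (m - b3) * E 3 x y
  r3 : ∀ x y, Fintype.card X * E 1 x y * E 3 x y = E 2 x y + E 4 x y
  r4 : ∀ x y, Fintype.card X * E 1 x y * E 4 x y =
    b3 * E 3 x y + (m - b4 - 1) * E 4 x y + c5 * E 5 x y
  r5 : ∀ x y, Fintype.card X * E 1 x y * E 5 x y =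
    b4 * E 4 x y + (m - 1 - c5) * E 5 x y + m * E 6 x y
  r6 : ∀ x y, Fintype.card X * E 1 x y * E 6 x y = E 5 x y

set_option linter.unusedSectionVars false

namespace ExceptionalKrein

variable {X : Type} [Fintype X] [DecidableEq X] [Nonempty X]
  {E : Fin 7 → Matrix X X ℝ} {m c2 b3 b4 c5 : ℝ}

/-- The imprimitivity idempotent `E₀ + E₃ + E₆`. -/
def F (E : Fin 7 → Matrix X X ℝ) : Matrix X X ℝ := E 0 + E 3 + E 6

/-! ### Row sums and products of idempotents -/

lemma card_pos' : (0 : ℝ) < Fintype.card X := by exact_mod_cast Fintype.card_pos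

lemma card_mul_E0 (h : ExceptionalKrein E m c2 b3 b4 c5) (x y : X) :
    (Fintype.card X : ℝ) * E 0 x y = 1 := by
  rw [h.zero, mul_inv_cancel₀ card_pos'.ne']

lemma row_sum (h : ExceptionalKrein E m c2 b3 b4 c5) {i : Fin 7} (hi : i ≠ 0) (x : X) :
    ∑ z, E i x z = 0 := by
  have h1 := congrFun (congrFun (h.orth i 0 hi) x) x
  simp only [Matrix.mul_apply, h.zero, ← Finset.sum_mul, Matrix.zero_apply] at h1
  exact (mul_eq_zero.1 h1).resolve_right (inv_ne_zero card_pos'.ne')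

lemma row_sum_zero (h : ExceptionalKrein E m c2 b3 b4 c5) (x : X) :
    ∑ z, E 0 x z = 1 := by
  simp [h.zero]

/-- `E₁` has constant diagonal `m / n`: sum `n (E₁ ∘ E₁) = m E₀ + c₂ E₂` along a row and use
`E₁² = E₁` on the left. -/
lemma u_diag (h : ExceptionalKrein E m c2 b3 b4 c5) (x : X) :
    (Fintype.card X : ℝ) * E 1 x x = m := by
  have h1 := congrFun (congrFun (h.idem 1) x) x
  rw [Matrix.mul_apply] at h1
  calc (Fintype.card X : ℝ) * E 1 x x
      = ∑ z, (m * E 0 x z + c2 * E 2 x z) := by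
        rw [← h1, Finset.mul_sum]
        refine Finset.sum_congr rfl fun z _ => ?_
        rw [← h.r1, h.symm 1 x z]; ring
    _ = m := by
        rw [Finset.sum_add_distrib, ← Finset.mul_sum, ← Finset.mul_sum, h.row_sum_zero,
          h.row_sum (by decide)]
        ring

lemma F_symm (h : ExceptionalKrein E m c2 b3 b4 c5) (x y : X) : F E y x = F E x y := by
  simp [F, Matrix.add_apply, h.symm _ x y]

lemma F_mul_F (h : ExceptionalKrein E m c2 b3 b4 c5) : F E * F E = F E := by
  simp (disch := decide) [F, add_mul, mul_add, h.idem, h.orth]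

lemma E0_mul_F (h : ExceptionalKrein E m c2 b3 b4 c5) : E 0 * F E = E 0 := by
  simp (disch := decide) [F, mul_add, h.idem, h.orth]

lemma E1_mul_F (h : ExceptionalKrein E m c2 b3 b4 c5) : E 1 * F E = 0 := by
  simp (disch := decide) [F, mul_add, h.orth]

lemma E2_mul_F (h : ExceptionalKrein E m c2 b3 b4 c5) : E 2 * F E = 0 := by
  simp (disch := decide) [F, mul_add, h.orth]

lemma E3_mul_F (h : ExceptionalKrein E m c2 b3 b4 c5) : E 3 * F E = E 3 := by
  simp (disch := decide) [F, mul_add, h.idem, h.orth]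

/-! ### Blocks of the imprimitivity idempotent -/

/-- The entrywise form of `n (E₁ ∘ F) = I - F`. -/
lemma u_mul_F (h : ExceptionalKrein E m c2 b3 b4 c5) (x y : X) :
    (Fintype.card X * E 1 x y + 1) * F E x y = (1 : Matrix X X ℝ) x y := by
  rw [← h.sum_one]
  simp only [F, Matrix.add_apply]
  linear_combination h.r3 x y + h.r6 x y + E 1 x y * h.card_mul_E0 x y

lemma F_diag (h : ExceptionalKrein E m c2 b3 b4 c5) (x : X) : F E x x = (m + 1)⁻¹ := by
  have h1 := h.u_mul_F x x
  rw [h.u_diag, Matrix.one_apply_eq] at h1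
  exact (inv_eq_of_mul_eq_one_right h1).symm

/-- `E₃` is a cubic polynomial in `n E₁`, entrywise. -/
lemma cubic_E3 (h : ExceptionalKrein E m c2 b3 b4 c5) (x y : X) {u : ℝ}
    (hu : Fintype.card X * E 1 x y = u) :
    c2 * (m - b3) * (Fintype.card X * E 3 x y) =
      (u - (m - 1 - c2)) * (u ^ 2 - m) - c2 * (m - 1) * u := by
  have h0 := h.card_mul_E0 x y
  have h1 := h.r1 x y
  have h2 := h.r2 x y
  rw [hu] at h1 h2
  linear_combination (-(u - (m - 1 - c2)) * Fintype.card X) * h1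
    - c2 * Fintype.card X * h2 - (u - (m - 1 - c2)) * m * h0
    + (u * (u - (m - 1 - c2)) - c2 * (m - 1)) * hu

/-- `F` is an explicit polynomial of degree six in `n E₁`, entrywise. -/
lemma sextic_F (h : ExceptionalKrein E m c2 b3 b4 c5) (x y : X) {u : ℝ}
    (hu : Fintype.card X * E 1 x y = u) :
    c2 * (m - b3) * c5 * m * (Fintype.card X * F E x y) =
      (u - m + 1) * (u ^ 2 + c2 * u - m) *
        ((u - (m - 1 - c2)) * (u ^ 2 - m) - c2 * (m - 1) * u - (m - b3) * (m - 1 - c5)) := by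
  have h0 := h.card_mul_E0 x y
  have h1 := h.r1 x y
  have h3 := h.r3 x y
  have h4 := h.r4 x y
  have h5 := h.r5 x y
  have hV3 := h.cubic_E3 x y hu
  rw [hu] at h1 h3 h4 h5
  have hb4 := h.param
  subst hb4
  simp only [F, Matrix.add_apply]
  set n : ℝ := (Fintype.card X : ℝ)
  set c3 := m - b3 with hc3
  have hb3 : b3 = m - c3 := by rw [hc3]; ring
  rw [hb3] at h4
  set a5 := m - 1 - c5 with ha5
  have hc5 : c5 = m - 1 - a5 := by rw [ha5]; ring
  rw [hc5] at h4 ⊢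
  have hV2 : c2 * (n * E 2 x y) = u ^ 2 - m := by
    linear_combination -n * h1 - m * h0 + u * hu
  have hV4 : c2 * c3 * (n * E 4 x y) =
      u * (c2 * c3 * (n * E 3 x y)) - c3 * (c2 * (n * E 2 x y)) := by
    linear_combination -c2 * c3 * n * h3
  rw [hV3, hV2] at hV4
  have hV5 : c2 * c3 * (m - 1 - a5) * (n * E 5 x y) =
      (u - (m - (a5 + c2) - 1)) * (c2 * c3 * (n * E 4 x y))
        - (m - c3) * (c2 * c3 * (n * E 3 x y)) := by
    linear_combination -c2 * c3 * n * h4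
  rw [hV3, hV4] at hV5
  have hV6 : c2 * c3 * (m - 1 - a5) * m * (n * E 6 x y) =
      (u - a5) * (c2 * c3 * (m - 1 - a5) * (n * E 5 x y))
        - (a5 + c2) * (m - 1 - a5) * (c2 * c3 * (n * E 4 x y)) := by
    linear_combination -c2 * c3 * (m - 1 - a5) * n * h5
  rw [hV5, hV4] at hV6
  linear_combination hV6 + (m - 1 - a5) * m * hV3 + c2 * c3 * (m - 1 - a5) * m * h0

/-- The entries of `F` are `0` and `1 / (m + 1)`: off the diagonal `F x y ≠ 0` forces
`n E₁ x y = -1`, and the sextic of `sextic_F` takes the same value at `-1` as at `m`. -/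
lemma F_eq (h : ExceptionalKrein E m c2 b3 b4 c5) {x y : X} (hF : F E x y ≠ 0) :
    F E x y = (m + 1)⁻¹ := by
  rcases eq_or_ne x y with rfl | hxy
  · exact h.F_diag x
  have h1 := h.u_mul_F x y
  rw [Matrix.one_apply_ne hxy] at h1
  have hu : (Fintype.card X : ℝ) * E 1 x y = -1 := by
    linarith [(mul_eq_zero.1 h1).resolve_right hF]
  have hm := h.sextic_F x x (h.u_diag x)
  have hneg := h.sextic_F x y hu
  rw [← h.F_diag x]
  have hk : c2 * (m - b3) * c5 * m * Fintype.card X ≠ 0 := by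
    have := h.c2_pos; have := h.c5_pos; have := h.m_gt; have := h.b3_lt
    have := card_pos' (X := X)
    have : 0 < m - b3 := by linarith
    have : 0 < m := by linarith
    positivity
  apply mul_left_cancel₀ hk
  linear_combination hneg - hm

lemma F_nonneg (h : ExceptionalKrein E m c2 b3 b4 c5) (x y : X) : 0 ≤ F E x y := by
  by_cases hF : F E x y = 0
  · exact hF.ge
  · rw [h.F_eq hF]
    have := h.m_gt
    positivity

lemma F_row_sum (h : ExceptionalKrein E m c2 b3 b4 c5) (x : X) : ∑ z, F E x z = 1 := by
  simp only [F, Matrix.add_apply, Finset.sum_add_distrib]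
  rw [h.row_sum_zero, h.row_sum (by decide), h.row_sum (by decide)]
  ring

/-- Each block has `m + 1` points, so `m` is an integer. -/
lemma three_le (h : ExceptionalKrein E m c2 b3 b4 c5) : 3 ≤ m := by
  obtain ⟨x⟩ := ‹Nonempty X›
  have h1 := h.F_row_sum x
  have hm := h.m_gt
  have h2 : ∑ z, F E x z = ∑ z, if F E x z ≠ 0 then (m + 1)⁻¹ else 0 :=
    Finset.sum_congr rfl fun z _ => by
      split_ifs with hz
      · exact h.F_eq hz
      · exact not_not.1 hz
  rw [h2, ← Finset.sum_filter, Finset.sum_const, nsmul_eq_mul] at h1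
  set N := (Finset.univ.filter fun z => F E x z ≠ 0).card
  have h3 : (N : ℝ) = m + 1 := by
    have : m + 1 ≠ 0 := by linarith
    field_simp at h1
    exact h1
  have h4 : (3 : ℝ) < N := by linarith
  have h5 : 4 ≤ N := by exact_mod_cast h4
  have h6 : (4 : ℝ) ≤ N := by exact_mod_cast h5
  linarith

/-- `E₃` is constant on blocks. -/
lemma E3_eq_of_F_ne_zero (h : ExceptionalKrein E m c2 b3 b4 c5) {y z : X} (hF : F E y z ≠ 0)
    (x : X) : E 3 x z = E 3 x y := by
  -- The rows of `F` at `y` and `z` agree: their difference has squared norm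
  -- `F y y - 2 * F y z + F z z = 0`.
  have hmul : ∀ p q, ∑ w, F E p w * F E q w = F E p q := fun p q => by
    conv_rhs => rw [← h.F_mul_F, Matrix.mul_apply]
    exact Finset.sum_congr rfl fun w _ => by rw [h.F_symm q w]
  have hsq : ∑ w, (F E y w - F E z w) ^ 2 = 0 := by
    calc ∑ w, (F E y w - F E z w) ^ 2
        = ∑ w, (F E y w * F E y w - 2 * (F E y w * F E z w) + F E z w * F E z w) :=
          Finset.sum_congr rfl fun w _ => by ring
      _ = F E y y - 2 * F E y z + F E z z := by
          rw [Finset.sum_add_distrib, Finset.sum_sub_distrib, ← Finset.mul_sum, hmul, hmul, hmul]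
      _ = 0 := by rw [h.F_eq hF, h.F_diag, h.F_diag]; ring
  have hrow : ∀ w, F E y w = F E z w := fun w => by
    have := (Finset.sum_eq_zero_iff_of_nonneg fun w _ => sq_nonneg _).1 hsq w (Finset.mem_univ w)
    linarith [pow_eq_zero_iff (two_ne_zero) |>.1 this]
  rw [← h.E3_mul_F, Matrix.mul_apply, Matrix.mul_apply]
  exact Finset.sum_congr rfl fun w _ => by rw [h.F_symm z w, h.F_symm y w, hrow w]

/-! ### Entries of `n E₁` and their averages over a block -/

/-- A root `θ` of `V(t) = (m - b3) * (m - 1 - c5)` is an entry of `n E₁`. The coefficients below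
form an eigenvector, with eigenvalue `θ`, of the tridiagonal matrix of the recurrence, so the
combination `∑ wⱼ Eⱼ` is annihilated entrywise by `n E₁ - θ`. It is nonzero because its row sums
equal `w₀ ≠ 0`. -/
lemma exists_entry (h : ExceptionalKrein E m c2 b3 b4 c5) {θ : ℝ}
    (hθ : (θ - (m - 1 - c2)) * (θ ^ 2 - m) - c2 * (m - 1) * θ = (m - b3) * (m - 1 - c5)) :
    ∃ x y, (Fintype.card X : ℝ) * E 1 x y = θ := by
  by_contra! hne
  have hW : ∀ x y, m * (m - 1) * b3 * E 0 x y + θ * (m - 1) * b3 * E 1 x y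
      + (θ ^ 2 - m) * b3 * E 2 x y + (m - 1 - c5) * (m - b3) * b3 * E 3 x y
      + -(θ ^ 2 - (m - 1 - c5) * θ - m) * (m - b3) * E 4 x y
      + -θ * (m - b3) * c5 * E 5 x y + -m * (m - b3) * c5 * E 6 x y = 0 := fun x y => by
    apply (mul_eq_zero.1 _).resolve_left (sub_ne_zero.2 (hne x y))
    have h1 := h.r1 x y
    have h2 := h.r2 x y
    have h3 := h.r3 x y
    have h4 := h.r4 x y
    have h5 := h.r5 x y
    have h6 := h.r6 x y
    have hb4 := h.param
    subst hb4
    linear_combination m * (m - 1) * b3 * E 1 x y * h.card_mul_E0 x y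
      + θ * (m - 1) * b3 * h1 + (θ ^ 2 - m) * b3 * h2
      + (m - 1 - c5) * (m - b3) * b3 * h3
      + -(θ ^ 2 - (m - 1 - c5) * θ - m) * (m - b3) * h4
      + -θ * (m - b3) * c5 * h5 + -m * (m - b3) * c5 * h6
      + (-b3 * E 2 x y + (m - b3) * E 4 x y) * hθ
  obtain ⟨x⟩ := ‹Nonempty X›
  have hsum := Finset.sum_eq_zero fun y (_ : y ∈ (Finset.univ : Finset X)) => hW x y
  simp only [Finset.sum_add_distrib, ← Finset.mul_sum] at hsum
  rw [h.row_sum_zero, h.row_sum (by decide), h.row_sum (by decide), h.row_sum (by decide),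
    h.row_sum (by decide), h.row_sum (by decide), h.row_sum (by decide)] at hsum
  have hb := h.b3_pos
  have hm := h.m_gt
  have : 0 < m * (m - 1) * b3 := mul_pos (mul_pos (by linarith) (by linarith)) hb
  linarith

/-- The `F`-weighted average of a monic quadratic in `n E₁ x ·` over a block: the moments of
order `0, 1, 2` are `1, 0, m`. -/
lemma average_quadratic (h : ExceptionalKrein E m c2 b3 b4 c5) (x y : X) (p q : ℝ) :
    ∑ z, F E y z * ((Fintype.card X * E 1 x z) ^ 2 + p * (Fintype.card X * E 1 x z) + q)
      = m + q := by
  have e0 := congrFun (congrFun h.E0_mul_F x) y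
  have e1 := congrFun (congrFun h.E1_mul_F x) y
  have e2 := congrFun (congrFun h.E2_mul_F x) y
  rw [Matrix.mul_apply] at e0 e1 e2
  rw [Matrix.zero_apply] at e1 e2
  set n : ℝ := (Fintype.card X : ℝ)
  calc ∑ z, F E y z * ((n * E 1 x z) ^ 2 + p * (n * E 1 x z) + q)
      = ∑ z, (n * m * (E 0 x z * F E z y) + n * c2 * (E 2 x z * F E z y)
          + p * n * (E 1 x z * F E z y) + q * F E y z) := by
        refine Finset.sum_congr rfl fun z _ => ?_
        rw [h.F_symm y z]
        linear_combination F E y z * n * h.r1 x z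
    _ = m + q := by
        simp only [Finset.sum_add_distrib, ← Finset.mul_sum]
        rw [e0, e1, e2, h.F_row_sum]
        linear_combination m * h.card_mul_E0 x y

/-- The root `θ` in `(m - 1, m)` and the average of `g` over a block give two incompatible bounds. -/
theorem contradiction (h : ExceptionalKrein E m c2 b3 b4 c5) : False := by
  have hc2 := h.c2_pos
  have hc5 := h.c5_pos
  have hm := h.three_le
  have hb3 := h.b3_pos
  have hb3m := h.b3_lt
  have hb4 := h.b4_pos
  rw [h.param] at hb4
  set V : ℝ → ℝ := fun t => (t - (m - 1 - c2)) * (t ^ 2 - m) - c2 * (m - 1) * t with hV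
  -- Intermediate value theorem: `V (m - 1) = -c2 * m` and `V m = m * (m - 1)` enclose the level.
  obtain ⟨θ, ⟨hθ1, hθ2⟩, hθ⟩ : ∃ θ ∈ Set.Ioo (m - 1) m, V θ = (m - b3) * (m - 1 - c5) := by
    have hcont : ContinuousOn V (Set.Icc (m - 1) m) := by
      apply Continuous.continuousOn
      rw [hV]; fun_prop
    apply intermediate_value_Ioo (by linarith) hcont
    constructor
    · have : V (m - 1) = -c2 * m := by rw [hV]; ring
      rw [this]
      nlinarith [mul_pos (sub_pos.2 hb3m) hb4, mul_pos hc2 hb3]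
    · have : V m = m * (m - 1) := by rw [hV]; ring
      rw [this]
      nlinarith [mul_pos (sub_pos.2 hb3m) hc5, mul_pos hb3 (by linarith : 0 < m - 1)]
  obtain ⟨x, y, hxy⟩ := h.exists_entry hθ
  set p := θ - (m - 1 - c2) with hp
  set q := θ ^ 2 - (m - 1 - c2) * θ - (m + c2 * (m - 1)) with hq
  -- `g t = t ^ 2 + p * t + q` satisfies `(t - θ) * g t = V t - V θ`.
  have hgθ : 0 < θ ^ 2 + p * θ + q := by
    rw [hp, hq]
    nlinarith [mul_pos (sub_pos.2 hθ1) hc2, mul_pos hc2 (by linarith : 0 < θ),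
      mul_pos (sub_pos.2 hθ1) (by linarith : 0 < θ)]
  have havg := h.average_quadratic x y p q
  have hterm : ∀ z, 0 ≤ F E y z *
      ((Fintype.card X * E 1 x z) ^ 2 + p * (Fintype.card X * E 1 x z) + q) := fun z => by
    by_cases hF : F E y z = 0
    · simp [hF]
    refine mul_nonneg (h.F_nonneg y z) ?_
    generalize ht : (Fintype.card X : ℝ) * E 1 x z = t
    have h3 := h.cubic_E3 x z ht
    rw [h.E3_eq_of_F_ne_zero hF, h.cubic_E3 x y hxy] at h3
    have h4 : (t - θ) * (t ^ 2 + p * t + q) = 0 := by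
      rw [hp, hq]; linear_combination -h3
    rcases mul_eq_zero.1 h4 with h5 | h5
    · rw [sub_eq_zero.1 h5]; exact hgθ.le
    · exact h5.ge
  -- Keep only the term `z = y`, where the weight is `F y y = 1 / (m + 1)` and `g` is `g θ`.
  have hle := Finset.single_le_sum (fun z _ => hterm z) (Finset.mem_univ y)
  rw [havg, hxy, h.F_diag, inv_mul_le_iff₀ (by linarith)] at hle
  have hfac : (m + 1) * (m + q) - (θ ^ 2 + p * θ + q) =
      -((m - θ) * ((m - 2) * θ - 1 + (m - 1) * c2)) := by
    rw [hp, hq]; ring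
  have hpos : 0 < (m - θ) * ((m - 2) * θ - 1 + (m - 1) * c2) := by
    refine mul_pos (by linarith) ?_
    nlinarith [mul_pos (by linarith : 0 < m - 1) hc2,
      mul_nonneg (by linarith : 0 ≤ m - 3) (by linarith : 0 ≤ θ)]
  linarith

end ExceptionalKrein

/-! ### Passage from the Krein array to the data above -/

/-- Theorem 3.2: nonexistence of a symmetric association scheme with six classes that is
Q-polynomial with Krein array {m, m-1, 1, b3, b4, 1; 1, c2, m-b3, 1, c5, m},
a2* = a4* + a5*, and first multiplicity m > 2.
The idempotents `EE` and the Krein sequences `b`, `a`, `c` are indexed by `ℤ`,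
with the conventions `E_{-1} = E_7 = 0` and `b_{-1} = 0` imposed explicitly. -/
theorem no_exceptional_imprimitive_Q_polynomial_scheme_six_classes :
    ¬ ∃ (X : Type) (_ : Fintype X) (_ : DecidableEq X) (_ : Nonempty X)
        (A : Fin 7 → Matrix X X ℝ) (EE : ℤ → Matrix X X ℝ)
        (m c2 b3 b4 c5 : ℝ) (b c a : ℤ → ℝ),
      m > 2 ∧ c2 > 0 ∧ c5 > 0 ∧ b3 > 0 ∧ b4 > 0 ∧ m - b3 > 0 ∧
      -- (a) each A_i is a symmetric 0-1 matrix, A_0 = I, and their sum is the all-ones matrix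
      (∀ i, (A i).IsSymm) ∧
      (∀ i x y, A i x y = 0 ∨ A i x y = 1) ∧
      A 0 = 1 ∧
      (∑ i, A i) = Matrix.of (fun _ _ => (1 : ℝ)) ∧
      -- (b) the span of the A_i is closed under multiplication
      (∀ i j, A i * A j ∈ Submodule.span ℝ (Set.range A)) ∧
      -- (c) the E_i are pairwise orthogonal nonzero idempotents summing to I,
      --     E_0 = (1/n) J, and each E_i lies in the span of the A_i
      (∀ i j : ℤ, 0 ≤ i → i ≤ 6 → 0 ≤ j → j ≤ 6 → i ≠ j → EE i * EE j = 0) ∧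
      (∀ i : ℤ, 0 ≤ i → i ≤ 6 → EE i * EE i = EE i) ∧
      (∑ i : Fin 7, EE ((i : ℕ) : ℤ)) = 1 ∧
      EE 0 = (Fintype.card X : ℝ)⁻¹ • Matrix.of (fun _ _ => (1 : ℝ)) ∧
      (∀ i : ℤ, 0 ≤ i → i ≤ 6 → EE i ≠ 0) ∧
      (∀ i : ℤ, 0 ≤ i → i ≤ 6 → EE i ∈ Submodule.span ℝ (Set.range A)) ∧
      (∀ i : ℤ, i < 0 ∨ 6 < i → EE i = 0) ∧
      -- the Krein array sequences
      (b (-1) = 0 ∧ b 0 = m ∧ b 1 = m - 1 ∧ b 2 = 1 ∧ b 3 = b3 ∧ b 4 = b4 ∧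
        b 5 = 1 ∧ b 6 = 0) ∧
      (c 1 = 1 ∧ c 2 = c2 ∧ c 3 = m - b3 ∧ c 4 = 1 ∧ c 5 = c5 ∧ c 6 = m ∧ c 7 = 1) ∧
      (a 0 = 0 ∧ ∀ j : ℤ, 1 ≤ j → j ≤ 6 → a j = m - b j - c j) ∧
      -- (d) the Q-polynomial (three-term Hadamard) recurrence
      (∀ j : ℤ, 0 ≤ j → j ≤ 6 →
        (Fintype.card X : ℝ) • Matrix.hadamard (EE 1) (EE j)
          = b (j - 1) • EE (j - 1) + a j • EE j + c (j + 1) • EE (j + 1)) ∧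
      -- (e)
      a 2 = a 4 + a 5 := by
  rintro ⟨X, _, _, _, A, EE, m, c2, b3, b4, c5, b, c, a, hm, hc2, hc5, hb3, hb4, hmb, hAs, -, -, -,
    -, horth, hidem, hsum, hE0, -, hspan, hout, ⟨-, b0, b1, b2, b3', b4', b5, b6⟩,
    ⟨c1, c2', c3, c4, c5', c6, c7⟩, ⟨a0, ha⟩, hrec, he⟩
  have a1 := ha 1 (by norm_num) (by norm_num)
  have a2 := ha 2 (by norm_num) (by norm_num)
  have a3 := ha 3 (by norm_num) (by norm_num)
  have a4 := ha 4 (by norm_num) (by norm_num)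
  have a5 := ha 5 (by norm_num) (by norm_num)
  have a6 := ha 6 (by norm_num) (by norm_num)
  rw [b1, c1] at a1
  rw [b2, c2'] at a2
  rw [b3', c3] at a3
  rw [b4', c4] at a4
  rw [b5, c5'] at a5
  rw [b6, c6] at a6
  have hrec' : ∀ j : ℤ, 0 ≤ j → j ≤ 6 → ∀ x y, (Fintype.card X : ℝ) * EE 1 x y * EE j x y =
      b (j - 1) * EE (j - 1) x y + a j * EE j x y + c (j + 1) * EE (j + 1) x y :=
    fun j h0 h6 x y => by
      have := congrFun (congrFun (hrec j h0 h6) x) y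
      simpa [Matrix.hadamard, mul_assoc] using this
  have hsymm : ∀ i : ℤ, 0 ≤ i → i ≤ 6 → ∀ x y, EE i y x = EE i x y := fun i h0 h6 x y => by
    have hs : (EE i).IsSymm := by
      refine Submodule.span_induction (p := fun M _ => M.IsSymm) ?_ Matrix.isSymm_zero
        (fun _ _ _ _ h1 h2 => h1.add h2) (fun r _ _ h1 => h1.smul r) (hspan i h0 h6)
      rintro _ ⟨j, rfl⟩
      exact hAs j
    exact hs.apply x y
  have r1 := hrec' 1 (by norm_num) (by norm_num)
  have r2 := hrec' 2 (by norm_num) (by norm_num)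
  have r3 := hrec' 3 (by norm_num) (by norm_num)
  have r4 := hrec' 4 (by norm_num) (by norm_num)
  have r5 := hrec' 5 (by norm_num) (by norm_num)
  have r6 := hrec' 6 (by norm_num) (by norm_num)
  norm_num only at r1 r2 r3 r4 r5 r6
  rw [hout 7 (by norm_num)] at r6
  simp only [b0, b1, b2, b3', b4', b5, c2', c3, c4, c5', c6, a1, a2, a3, a4, a5, a6]
    at r1 r2 r3 r4 r5 r6
  rw [a2, a4, a5] at he
  refine ExceptionalKrein.contradiction (E := fun i : Fin 7 => EE ((i : ℕ) : ℤ))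
    (m := m) (c2 := c2) (b3 := b3) (b4 := b4) (c5 := c5) ?_
  exact
    { m_gt := hm
      c2_pos := hc2
      c5_pos := hc5
      b3_pos := hb3
      b4_pos := hb4
      b3_lt := by linarith
      param := by linarith
      symm := fun i => hsymm _ (by omega) (by omega)
      orth := fun i j hij => horth _ _ (by omega) (by omega) (by omega) (by omega)
        (by exact_mod_cast Fin.val_ne_of_ne hij)
      idem := fun i => hidem _ (by omega) (by omega)
      sum_one := by rw [← hsum, Fin.sum_univ_seven]
      zero := fun x y => by
        have := congrFun (congrFun hE0 x) y
        simpa using this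
      r1 := fun x y => (r1 x y).trans (by
        change _ = m * EE 0 x y + c2 * EE 2 x y
        ring)
      r2 := fun x y => (r2 x y).trans (by
        change _ = (m - 1) * EE 1 x y + (m - 1 - c2) * EE 2 x y + (m - b3) * EE 3 x y
        ring)
      r3 := fun x y => (r3 x y).trans (by
        change _ = EE 2 x y + EE 4 x y
        ring)
      r4 := fun x y => (r4 x y).trans (by
        change _ = b3 * EE 3 x y + (m - b4 - 1) * EE 4 x y + c5 * EE 5 x y
        ring)
      r5 := fun x y => (r5 x y).trans (by
        change _ = b4 * EE 4 x y + (m - 1 - c5) * EE 5 x y + m * EE 6 x y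
        ring)
      r6 := fun x y => (r6 x y).trans (by
        change _ = EE 5 x y
        rw [Matrix.zero_apply]; ring) }
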